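/- Let (X,μ) and (Y,ν) be standard Borel spaces with finite Borel measures and let n ≥ 1. For each k, let D^k be an n-diagonal system, and suppose r(D^k) → 0 as k → ∞. Then for every compact operator T : L²(X,μ) → L²(Y,ν), the operators π_{D^k}(T) = ∑_{Π = α×β ∈ D^k} P(β)∘T∘P(α) satisfy ‖π_{D^k}(T)‖ → 0 as k → ∞. -/

import Mathlib

open MeasureTheory

/-!
Let `P α` denote multiplication by the indicator of `α`, an orthogonal projection of `L²`
(`indicatorL`). For a diagonal system the projections `P α_i` are mutually orthogonal and so are the
`P β_i`, hence by Pythagoras and Bessel the norm of `∑ P β_i T P α_i` is at most the largest of the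
norms of its blocks `P β_i T P α_i` (`norm_sum_blocks_le`). Splitting an `n`-diagonal system by
colour costs only a factor `n`, so it suffices that a block is small as soon as `min (μ α) (ν β)` is
small (`exists_block_le`).

This is where compactness enters: the image of the unit ball has a finite `ε`-net, and a finite
subset of `L²` is uniformly absolutely continuous. So `P β T` is small in norm when `ν β` is small
(`exists_indicatorL_comp_le`). For `T P α` one uses that `‖T P α f‖² = ⟪T P α f, T P α f⟫`, where
one factor may be replaced by a point `g` of the net, and `⟪T P α f, g⟫ = ⟪f, P α T† g⟫`
(`exists_comp_indicatorL_le`).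
-/

open scoped InnerProductSpace

/-! ### Block-diagonal operators between Hilbert spaces -/

section Blocks

variable {ι H K : Type*} [NormedAddCommGroup H] [InnerProductSpace ℂ H]
  [NormedAddCommGroup K] [InnerProductSpace ℂ K]

lemma inner_self_eq_ofReal (v : H) : ⟪v, v⟫_ℂ = ((‖v‖ ^ 2 : ℝ) : ℂ) := by
  rw [inner_self_eq_norm_sq_to_K]
  push_cast
  rfl

/-- Pythagoras for finitely many pairwise orthogonal vectors. -/
lemma norm_sum_sq_of_orthogonal (s : Finset ι) (v : ι → H)
    (h : ∀ i ∈ s, ∀ j ∈ s, i ≠ j → ⟪v i, v j⟫_ℂ = 0) :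
    ‖∑ i ∈ s, v i‖ ^ 2 = ∑ i ∈ s, ‖v i‖ ^ 2 := by
  have key : ⟪∑ i ∈ s, v i, ∑ i ∈ s, v i⟫_ℂ = ∑ i ∈ s, ((‖v i‖ ^ 2 : ℝ) : ℂ) := by
    rw [sum_inner]
    refine Finset.sum_congr rfl fun i hi => ?_
    rw [inner_sum, Finset.sum_eq_single i (fun j hj hji => h i hi j hj hji.symm)
      (fun hi' => absurd hi hi'), inner_self_eq_ofReal]
  rw [inner_self_eq_ofReal, ← Complex.ofReal_sum] at key
  exact Complex.ofReal_injective key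

/-- Bessel's inequality for mutually orthogonal projections. -/
lemma sum_norm_sq_le (s : Finset ι) (P : ι → H →L[ℂ] H)
    (hsa : ∀ i f g, ⟪P i f, g⟫_ℂ = ⟪f, P i g⟫_ℂ) (hid : ∀ i f, P i (P i f) = P i f)
    (horth : ∀ i ∈ s, ∀ j ∈ s, i ≠ j → ∀ f, P i (P j f) = 0) (f : H) :
    ∑ i ∈ s, ‖P i f‖ ^ 2 ≤ ‖f‖ ^ 2 := by
  have h1 : ‖∑ i ∈ s, P i f‖ ^ 2 = ∑ i ∈ s, ‖P i f‖ ^ 2 :=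
    norm_sum_sq_of_orthogonal s _ fun i hi j hj hij => by
      rw [hsa, horth i hi j hj hij, inner_zero_right]
  have h2 : ⟪∑ i ∈ s, P i f, f⟫_ℂ = ((∑ i ∈ s, ‖P i f‖ ^ 2 : ℝ) : ℂ) := by
    rw [sum_inner, Complex.ofReal_sum]
    refine Finset.sum_congr rfl fun i _ => ?_
    rw [← inner_self_eq_ofReal, ← hsa, hid]
  have h3 : ∑ i ∈ s, ‖P i f‖ ^ 2 ≤ ‖∑ i ∈ s, P i f‖ * ‖f‖ := by
    have h4 := norm_inner_le_norm (𝕜 := ℂ) (∑ i ∈ s, P i f) f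
    rw [h2, Complex.norm_real] at h4
    exact (le_abs_self _).trans h4
  rw [← h1] at h3 ⊢
  nlinarith [norm_nonneg (∑ i ∈ s, P i f), norm_nonneg f,
    sq_nonneg (‖∑ i ∈ s, P i f‖ - ‖f‖)]

/-- A block-diagonal operator is bounded by any common bound of its blocks. -/
lemma norm_sum_blocks_le (s : Finset ι) (P : ι → H →L[ℂ] H) (Q : ι → K →L[ℂ] K)
    (hPsa : ∀ i f g, ⟪P i f, g⟫_ℂ = ⟪f, P i g⟫_ℂ) (hPid : ∀ i f, P i (P i f) = P i f)
    (hPorth : ∀ i ∈ s, ∀ j ∈ s, i ≠ j → ∀ f, P i (P j f) = 0)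
    (hQsa : ∀ i f g, ⟪Q i f, g⟫_ℂ = ⟪f, Q i g⟫_ℂ)
    (hQorth : ∀ i ∈ s, ∀ j ∈ s, i ≠ j → ∀ f, Q i (Q j f) = 0)
    (T : H →L[ℂ] K) {c : ℝ} (hc : 0 ≤ c)
    (hb : ∀ i ∈ s, ∀ f, ‖Q i (T (P i f))‖ ≤ c * ‖f‖) (f : H) :
    ‖∑ i ∈ s, Q i (T (P i f))‖ ≤ c * ‖f‖ := by
  refine le_of_sq_le_sq ?_ (by positivity)
  rw [norm_sum_sq_of_orthogonal s _ fun i hi j hj hij => by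
      rw [hQsa, hQorth i hi j hj hij, inner_zero_right]]
  calc ∑ i ∈ s, ‖Q i (T (P i f))‖ ^ 2 ≤ ∑ i ∈ s, c ^ 2 * ‖P i f‖ ^ 2 := by
        refine Finset.sum_le_sum fun i hi => ?_
        have := hb i hi (P i f)
        rw [hPid] at this
        rw [← mul_pow]
        gcongr
    _ = c ^ 2 * ∑ i ∈ s, ‖P i f‖ ^ 2 := by rw [Finset.mul_sum]
    _ ≤ c ^ 2 * ‖f‖ ^ 2 := by
        gcongr
        exact sum_norm_sq_le s P hPsa hPid hPorth f
    _ = (c * ‖f‖) ^ 2 := by ring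

end Blocks

/-! ### Multiplication by indicator functions on `L²` -/

section Indicator

variable {X : Type*} [MeasurableSpace X] {μ : Measure X}

lemma memLp_indicator {s : Set X} (hs : MeasurableSet s) (f : Lp ℂ 2 μ) :
    MemLp (s.indicator ⇑f) 2 μ :=
  (Lp.memLp f).indicator hs

/-- Multiplication by the indicator function of `s` as a linear map of `L²(μ)`. -/
noncomputable def indicatorLM (μ : Measure X) (s : Set X) (hs : MeasurableSet s) :
    Lp ℂ 2 μ →ₗ[ℂ] Lp ℂ 2 μ where
  toFun f := (memLp_indicator hs f).toLp _
  map_add' f g := by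
    rw [← MemLp.toLp_add]
    refine MemLp.toLp_congr _ _ ?_
    filter_upwards [Lp.coeFn_add f g] with x hx
    by_cases h : x ∈ s
    · simp only [Set.indicator_of_mem h, hx, Pi.add_apply]
    · simp only [Set.indicator_of_notMem h, Pi.add_apply, add_zero]
  map_smul' c f := by
    rw [RingHom.id_apply, ← MemLp.toLp_const_smul]
    refine MemLp.toLp_congr _ _ ?_
    filter_upwards [Lp.coeFn_smul c f] with x hx
    by_cases h : x ∈ s
    · simp only [Set.indicator_of_mem h, hx, Pi.smul_apply]
    · simp only [Set.indicator_of_notMem h, Pi.smul_apply, smul_zero]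

lemma indicatorLM_apply {s : Set X} (hs : MeasurableSet s) (f : Lp ℂ 2 μ) :
    indicatorLM μ s hs f = (memLp_indicator hs f).toLp _ := rfl

lemma norm_indicatorLM_le {s : Set X} (hs : MeasurableSet s) (f : Lp ℂ 2 μ) :
    ‖indicatorLM μ s hs f‖ ≤ 1 * ‖f‖ := by
  rw [indicatorLM_apply, one_mul, Lp.norm_toLp, Lp.norm_def]
  exact ENNReal.toReal_mono (Lp.eLpNorm_ne_top f) (eLpNorm_indicator_le _)

/-- The bounded operator `P(s)` on `L²(μ)` of multiplication by the indicator function of `s`. -/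
noncomputable def indicatorL (μ : Measure X) (s : Set X) (hs : MeasurableSet s) :
    Lp ℂ 2 μ →L[ℂ] Lp ℂ 2 μ :=
  (indicatorLM μ s hs).mkContinuous 1 (norm_indicatorLM_le hs)

variable {s : Set X} (hs : MeasurableSet s)

lemma indicatorL_apply (f : Lp ℂ 2 μ) :
    indicatorL μ s hs f = (memLp_indicator hs f).toLp _ := by
  rw [indicatorL, LinearMap.mkContinuous_apply, indicatorLM_apply]

lemma indicatorL_coeFn (f : Lp ℂ 2 μ) : ⇑(indicatorL μ s hs f) =ᵐ[μ] s.indicator ⇑f := by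
  rw [indicatorL_apply]
  exact MemLp.coeFn_toLp (memLp_indicator hs f)

lemma norm_indicatorL_apply (f : Lp ℂ 2 μ) :
    ‖indicatorL μ s hs f‖ = (eLpNorm (s.indicator ⇑f) 2 μ).toReal := by
  rw [indicatorL_apply, Lp.norm_toLp]

lemma norm_indicatorL_le (f : Lp ℂ 2 μ) : ‖indicatorL μ s hs f‖ ≤ ‖f‖ := by
  rw [norm_indicatorL_apply, Lp.norm_def]
  exact ENNReal.toReal_mono (Lp.eLpNorm_ne_top f) (eLpNorm_indicator_le _)

lemma inner_indicatorL (f g : Lp ℂ 2 μ) :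
    ⟪indicatorL μ s hs f, g⟫_ℂ = ⟪f, indicatorL μ s hs g⟫_ℂ := by
  rw [L2.inner_def, L2.inner_def]
  refine integral_congr_ae ?_
  filter_upwards [indicatorL_coeFn hs f, indicatorL_coeFn hs g] with x h1 h2
  by_cases h : x ∈ s <;> simp [h, h1, h2]

lemma indicatorL_idem (f : Lp ℂ 2 μ) :
    indicatorL μ s hs (indicatorL μ s hs f) = indicatorL μ s hs f := by
  refine Lp.ext ?_
  filter_upwards [indicatorL_coeFn hs f, indicatorL_coeFn hs (indicatorL μ s hs f)] with x h1 h2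
  by_cases h : x ∈ s <;> simp [h, h1, h2]

lemma indicatorL_disjoint {t : Set X} (ht : MeasurableSet t) (hst : Disjoint s t)
    (f : Lp ℂ 2 μ) : indicatorL μ s hs (indicatorL μ t ht f) = 0 := by
  refine Lp.ext ?_
  filter_upwards [indicatorL_coeFn ht f, indicatorL_coeFn hs (indicatorL μ t ht f),
    Lp.coeFn_zero ℂ 2 μ] with x h1 h2 h3
  rw [h2, h3]
  by_cases h : x ∈ s
  · simp [h, h1, Set.disjoint_left.mp hst h]
  · simp [h]

/-- Finite subsets of `L²` are uniformly absolutely continuous. -/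
lemma exists_indicatorL_le_of_finite [IsFiniteMeasure μ] {G : Set (Lp ℂ 2 μ)} (hG : G.Finite)
    {ε : ℝ} (hε : 0 < ε) :
    ∃ δ > 0, ∀ (s : Set X) (hs : MeasurableSet s), (μ s).toReal ≤ δ →
      ∀ g ∈ G, ‖indicatorL μ s hs g‖ ≤ ε := by
  induction G, hG using Set.Finite.induction_on with
  | empty => exact ⟨1, one_pos, by simp⟩
  | @insert a G _ _ ih =>
    obtain ⟨δ₁, hδ₁, h₁⟩ := ih
    obtain ⟨δ₂, hδ₂, h₂⟩ := (Lp.memLp a).eLpNorm_indicator_le (by norm_num) (by norm_num) hε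
    refine ⟨min δ₁ δ₂, lt_min hδ₁ hδ₂, fun s hs hμ g hg => ?_⟩
    rcases hg with rfl | hg
    · rw [norm_indicatorL_apply]
      refine ENNReal.toReal_le_of_le_ofReal hε.le (h₂ s hs ?_)
      rw [ENNReal.le_ofReal_iff_toReal_le (measure_ne_top _ _) hδ₂.le]
      exact hμ.trans (min_le_right _ _)
    · exact h₁ s hs (hμ.trans (min_le_left _ _)) g hg

end Indicator

/-! ### Blocks of a compact operator -/

section Compact

variable {X Y : Type*} [MeasurableSpace X] [MeasurableSpace Y]
  {μ : Measure X} {ν : Measure Y}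

/-- The image of the unit ball under a compact operator has a finite `ε`-net. -/
lemma exists_finite_net (T : Lp ℂ 2 μ →L[ℂ] Lp ℂ 2 ν) (hT : IsCompactOperator ⇑T)
    {ε : ℝ} (hε : 0 < ε) :
    ∃ G : Set (Lp ℂ 2 ν), G.Finite ∧ ∀ f, ‖f‖ ≤ 1 → ∃ g ∈ G, ‖T f - g‖ < ε := by
  have hc : IsCompact (closure (T '' Metric.closedBall 0 1)) :=
    IsCompactOperator.isCompact_closure_image_closedBall (f := T.toLinearMap) hT 1
  obtain ⟨G, hG, hsub⟩ := Metric.totallyBounded_iff.mp hc.totallyBounded ε hε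
  refine ⟨G, hG, fun f hf => ?_⟩
  have := hsub (subset_closure (Set.mem_image_of_mem T (mem_closedBall_zero_iff.mpr hf)))
  simpa [dist_eq_norm] using this

/-- `‖P(t) T‖ → 0` as `ν t → 0`. -/
lemma exists_indicatorL_comp_le (T : Lp ℂ 2 μ →L[ℂ] Lp ℂ 2 ν) (hT : IsCompactOperator ⇑T)
    [IsFiniteMeasure ν] {ε : ℝ} (hε : 0 < ε) :
    ∃ δ > 0, ∀ (t : Set Y) (ht : MeasurableSet t), (ν t).toReal ≤ δ →
      ∀ f, ‖f‖ ≤ 1 → ‖indicatorL ν t ht (T f)‖ ≤ ε := by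
  obtain ⟨G, hG, hnet⟩ := exists_finite_net T hT (half_pos hε)
  obtain ⟨δ, hδ, h⟩ := exists_indicatorL_le_of_finite hG (half_pos hε)
  refine ⟨δ, hδ, fun t ht hν f hf => ?_⟩
  obtain ⟨g, hg, hfg⟩ := hnet f hf
  calc ‖indicatorL ν t ht (T f)‖
      = ‖indicatorL ν t ht (T f - g) + indicatorL ν t ht g‖ := by
        rw [← map_add, sub_add_cancel]
    _ ≤ ‖indicatorL ν t ht (T f - g)‖ + ‖indicatorL ν t ht g‖ := norm_add_le _ _
    _ ≤ ε / 2 + ε / 2 :=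
        add_le_add ((norm_indicatorL_le ht _).trans hfg.le) (h t ht hν g hg)
    _ = ε := add_halves ε

/-- `‖T P(s)‖ → 0` as `μ s → 0`. -/
lemma exists_comp_indicatorL_le (T : Lp ℂ 2 μ →L[ℂ] Lp ℂ 2 ν) (hT : IsCompactOperator ⇑T)
    [IsFiniteMeasure μ] {ε : ℝ} (hε : 0 < ε) :
    ∃ δ > 0, ∀ (s : Set X) (hs : MeasurableSet s), (μ s).toReal ≤ δ →
      ∀ f, ‖f‖ ≤ 1 → ‖T (indicatorL μ s hs f)‖ ≤ ε := by
  have hη : 0 < ε ^ 2 / 2 / (‖T‖ + 1) := by positivity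
  obtain ⟨G, hG, hnet⟩ := exists_finite_net T hT hη
  obtain ⟨δ, hδ, h⟩ := exists_indicatorL_le_of_finite
    (hG.image (ContinuousLinearMap.adjoint T)) (half_pos (pow_pos hε 2))
  refine ⟨δ, hδ, fun s hs hμ f hf => ?_⟩
  have hPf : ‖indicatorL μ s hs f‖ ≤ 1 := (norm_indicatorL_le hs f).trans hf
  obtain ⟨g, hg, hfg⟩ := hnet _ hPf
  set u := T (indicatorL μ s hs f) with hu
  have hTu : ‖u‖ ≤ ‖T‖ + 1 := by
    have := T.le_opNorm_of_le hPf
    linarith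
  -- Split `‖u‖² = ⟪u, u - g⟫ + ⟪u, g⟫`; the second term equals `⟪f, P(s) T† g⟫`.
  have h1 : ‖⟪u, u - g⟫_ℂ‖ ≤ ε ^ 2 / 2 := by
    calc ‖⟪u, u - g⟫_ℂ‖ ≤ ‖u‖ * ‖u - g‖ := norm_inner_le_norm _ _
      _ ≤ (‖T‖ + 1) * (ε ^ 2 / 2 / (‖T‖ + 1)) := by gcongr
      _ = ε ^ 2 / 2 := by field_simp
  have h2 : ‖⟪u, g⟫_ℂ‖ ≤ ε ^ 2 / 2 := by
    rw [hu, ← ContinuousLinearMap.adjoint_inner_right, inner_indicatorL]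
    refine (norm_inner_le_norm _ _).trans ?_
    have := h s hs hμ _ (Set.mem_image_of_mem _ hg)
    calc _ ≤ 1 * (ε ^ 2 / 2) := by gcongr
      _ = _ := one_mul _
  refine le_of_sq_le_sq ?_ hε.le
  calc ‖u‖ ^ 2 = ‖⟪u, u - g⟫_ℂ + ⟪u, g⟫_ℂ‖ := by
        rw [← inner_add_right, sub_add_cancel, inner_self_eq_norm_sq_to_K]
        simp
    _ ≤ ‖⟪u, u - g⟫_ℂ‖ + ‖⟪u, g⟫_ℂ‖ := norm_add_le _ _
    _ ≤ ε ^ 2 := by linarith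

/-- The blocks `P(t) T P(s)` of a compact operator tend to `0` uniformly as
`min (μ s) (ν t) → 0`. -/
lemma exists_block_le (T : Lp ℂ 2 μ →L[ℂ] Lp ℂ 2 ν) (hT : IsCompactOperator ⇑T)
    [IsFiniteMeasure μ] [IsFiniteMeasure ν] {ε : ℝ} (hε : 0 < ε) :
    ∃ δ > 0, ∀ (s : Set X) (hs : MeasurableSet s) (t : Set Y) (ht : MeasurableSet t),
      min (μ s).toReal (ν t).toReal ≤ δ →
      ∀ f, ‖indicatorL ν t ht (T (indicatorL μ s hs f))‖ ≤ ε * ‖f‖ := by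
  obtain ⟨δ₁, hδ₁, h₁⟩ := exists_comp_indicatorL_le T hT hε
  obtain ⟨δ₂, hδ₂, h₂⟩ := exists_indicatorL_comp_le T hT hε
  refine ⟨min δ₁ δ₂, lt_min hδ₁ hδ₂, fun s hs t ht hst f => ?_⟩
  have key : ∀ f, ‖f‖ = 1 → ‖indicatorL ν t ht (T (indicatorL μ s hs f))‖ ≤ ε := fun f hf => by
    rcases min_le_iff.mp hst with hμ | hν
    · exact (norm_indicatorL_le ht _).trans
        (h₁ s hs (hμ.trans (min_le_left _ _)) f hf.le)
    · exact h₂ t ht (hν.trans (min_le_right _ _)) _ ((norm_indicatorL_le hs f).trans hf.le)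
  have hop : ‖(indicatorL ν t ht).comp (T.comp (indicatorL μ s hs))‖ ≤ ε :=
    ContinuousLinearMap.opNorm_le_of_unit_norm hε.le key
  exact ContinuousLinearMap.le_of_opNorm_le _ hop f

end Compact

/-- Let `(D^k)` be a sequence of `n`-diagonal systems (finite families
of pairwise disjoint measurable rectangles that can be coloured with `n` colours so
that rectangles of the same colour have disjoint first factors and disjoint second
factors) whose volumes `r(D^k) = max_j min(μ(α_j), ν(β_j))` tend to `0`.  Then for
every compact operator `T : L²(X,μ) → L²(Y,ν)` the operators
`π_{D^k}(T) = ∑_{α×β ∈ D^k} P(β) T P(α)` (characterized here by: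
`π_{D^k}(T) f = ∑_j χ_{β_j}·T(χ_{α_j} f)` a.e.) satisfy `‖π_{D^k}(T)‖ → 0`. -/
theorem stmt_10
    {X Y : Type*} [MeasurableSpace X] [StandardBorelSpace X]
    [MeasurableSpace Y] [StandardBorelSpace Y]
    (μ : Measure X) (ν : Measure Y) [IsFiniteMeasure μ] [IsFiniteMeasure ν]
    (n : ℕ) (hn : 1 ≤ n)
    (J : ℕ → ℕ) (α : ∀ k, Fin (J k) → Set X) (β : ∀ k, Fin (J k) → Set Y)
    (hα : ∀ k i, MeasurableSet (α k i)) (hβ : ∀ k i, MeasurableSet (β k i))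
    (hdisj : ∀ k, Pairwise fun i i' : Fin (J k) =>
        Disjoint (α k i ×ˢ β k i) (α k i' ×ˢ β k i'))
    (hndiag : ∀ k, ∃ color : Fin (J k) → Fin n, ∀ i i' : Fin (J k), i ≠ i' →
        color i = color i' → Disjoint (α k i) (α k i') ∧ Disjoint (β k i) (β k i'))
    (hr : Filter.Tendsto
        (fun k => ⨆ i : Fin (J k), min ((μ (α k i)).toReal) ((ν (β k i)).toReal))
        Filter.atTop (nhds 0))
    (T : Lp ℂ 2 μ →L[ℂ] Lp ℂ 2 ν) (hT : IsCompactOperator ⇑T)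
    (S : ℕ → (Lp ℂ 2 μ →L[ℂ] Lp ℂ 2 ν))
    (hS : ∀ k (f : Lp ℂ 2 μ) (F : Fin (J k) → Lp ℂ 2 μ),
        (∀ i, (⇑(F i) : X → ℂ) =ᵐ[μ] (α k i).indicator ⇑f) →
        (⇑(S k f) : Y → ℂ) =ᵐ[ν] fun y => ∑ i, (β k i).indicator (⇑(T (F i))) y) :
    Filter.Tendsto (fun k => ‖S k‖) Filter.atTop (nhds 0) := by
  -- `S k` is the sum of the blocks of `T`.
  have hSk : ∀ k f, S k f = ∑ i, indicatorL ν (β k i) (hβ k i)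
      (T (indicatorL μ (α k i) (hα k i) f)) := by
    intro k f
    have h1 := hS k f (fun i => indicatorL μ (α k i) (hα k i) f)
      fun i => indicatorL_coeFn (hα k i) f
    refine Lp.ext (h1.trans ?_)
    have h2 : ∀ᵐ y ∂ν, ∀ i, indicatorL ν (β k i) (hβ k i)
        (T (indicatorL μ (α k i) (hα k i) f)) y =
        (β k i).indicator (⇑(T (indicatorL μ (α k i) (hα k i) f))) y :=
      ae_all_iff.mpr fun i => indicatorL_coeFn (hβ k i) _
    filter_upwards [h2, Lp.coeFn_fun_finsetSum Finset.univ fun i =>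
      indicatorL ν (β k i) (hβ k i) (T (indicatorL μ (α k i) (hα k i) f))] with y hy hsum
    rw [hsum]
    exact Finset.sum_congr rfl fun i _ => (hy i).symm
  rw [Metric.tendsto_nhds]
  intro ε hε
  -- With `n` colours, blocks of norm at most `ε / (n + 1)` give `‖S k‖ ≤ n * (ε / (n + 1)) < ε`.
  have hη : 0 < ε / (n + 1) := by positivity
  obtain ⟨δ, hδ, hblock⟩ := exists_block_le T hT hη
  filter_upwards [hr.eventually_lt_const hδ] with k hk
  obtain ⟨color, hcolor⟩ := hndiag k
  have hmin : ∀ i, min ((μ (α k i)).toReal) ((ν (β k i)).toReal) ≤ δ := fun i =>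
    (le_ciSup (Set.finite_range fun i : Fin (J k) =>
      min ((μ (α k i)).toReal) ((ν (β k i)).toReal)).bddAbove i).trans hk.le
  have hnorm : ‖S k‖ ≤ n * (ε / (n + 1)) := by
    refine ContinuousLinearMap.opNorm_le_bound _ (by positivity) fun f => ?_
    rw [hSk, ← Finset.sum_fiberwise Finset.univ color]
    refine (norm_sum_le _ _).trans ?_
    calc _ ≤ ∑ _c : Fin n, ε / (n + 1) * ‖f‖ := by
          refine Finset.sum_le_sum fun c _ => ?_
          refine norm_sum_blocks_le _ (fun i => indicatorL μ (α k i) (hα k i))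
            (fun i => indicatorL ν (β k i) (hβ k i))
            (fun i => inner_indicatorL _) (fun i => indicatorL_idem _) ?_
            (fun i => inner_indicatorL _) ?_ T hη.le
            (fun i _ => hblock _ _ _ _ (hmin i)) f
          · intro i hi j hj hij
            simp only [Finset.mem_filter, Finset.mem_univ, true_and] at hi hj
            exact indicatorL_disjoint _ _ (hcolor i j hij (hi.trans hj.symm)).1
          · intro i hi j hj hij
            simp only [Finset.mem_filter, Finset.mem_univ, true_and] at hi hj
            exact indicatorL_disjoint _ _ (hcolor i j hij (hi.trans hj.symm)).2
      _ = n * (ε / (n + 1)) * ‖f‖ := by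
          rw [Finset.sum_const, Finset.card_univ, Fintype.card_fin, nsmul_eq_mul, mul_assoc]
  rw [dist_zero_right, norm_norm]
  refine hnorm.trans_lt ?_
  rw [mul_div_assoc', div_lt_iff₀ (by positivity)]
  linarith
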